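/- Let f ∈ C²((0,∞)) be a solution of the profile equation f'' + ((N−1)/r + r/2)f' + f/α + |f|^α f = 0 on (0,∞). Then: (1) the limit ℓ = lim_{r→0} r^{2/α} f(r) exists and ℓ ∈ {0, β^{1/α}, −β^{1/α}}; (2) lim_{r→0} r^{1+2/α} f'(r) = −(2/α) ℓ; (3) the limit μ = lim_{r→∞} r^{2/α} f(r) exists and is a finite real number. -/

import Mathlib

open Filter

/-!
In the logarithmic variable `t = log r`, the function `w t = r ^ (2 / α) * f r` satisfies the
damped oscillator equation `w'' + (exp (2 * t) / 2 - c) w' + |w|^α w - β w = 0`, where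
`c = 4 / α - (N - 2)` is positive. The potential of this equation is coercive, so wherever the
damping pushes the energy down, the trajectory stays bounded.

As `t → ∞` the damping is so strong that `w' = O(exp (-t))`, hence `w` converges. In the reversed
time `s = -t → ∞` the damping tends to `c`. The dissipated energy controls `∫ (w')²`, which is
therefore finite, and this forces `w' → 0`. Then the potential energy of `w` converges as well;
since the potential is constant on no interval, `w` itself converges, and its limit is an
equilibrium.
-/

section

open Set Topology MeasureTheory

section RealAnalysis

lemma exists_tendsto_of_antitoneOn_Ici {u : ℝ → ℝ} {s₀ m : ℝ} (hu : AntitoneOn u (Ici s₀))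
    (hm : ∀ s ∈ Ici s₀, m ≤ u s) : ∃ L, Tendsto u atTop (𝓝 L) := by
  have hanti : Antitone fun s ↦ u (max s s₀) := fun _ _ hst ↦
    hu (mem_Ici.2 (le_max_right _ _)) (mem_Ici.2 (le_max_right _ _)) (max_le_max_right _ hst)
  have hbdd : BddBelow (range fun s ↦ u (max s s₀)) :=
    ⟨m, forall_mem_range.2 fun _ ↦ hm _ (mem_Ici.2 (le_max_right _ _))⟩
  refine ⟨_, (tendsto_atTop_ciInf hanti hbdd).congr' ?_⟩
  filter_upwards [eventually_ge_atTop s₀] with s hs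
  rw [max_eq_left hs]

lemma antitoneOn_Ici_of_hasDerivAt_nonpos {u u' : ℝ → ℝ} {s₀ : ℝ}
    (hu : ∀ s ∈ Ici s₀, HasDerivAt u (u' s) s) (hu' : ∀ s ∈ Ici s₀, u' s ≤ 0) :
    AntitoneOn u (Ici s₀) :=
  antitoneOn_of_hasDerivWithinAt_nonpos (convex_Ici s₀)
    (fun s hs ↦ (hu s hs).continuousAt.continuousWithinAt)
    (fun s hs ↦ (hu s (interior_subset hs)).hasDerivWithinAt)
    (fun s hs ↦ hu' s (interior_subset hs))

lemma eq_zero_of_tendsto_of_tendsto_hasDerivAt {u u' : ℝ → ℝ} {s₀ m L : ℝ}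
    (hu : ∀ s ∈ Ici s₀, HasDerivAt u (u' s) s) (hm : Tendsto u atTop (𝓝 m))
    (hL : Tendsto u' atTop (𝓝 L)) : L = 0 := by
  have hslope : ∀ s ∈ Ici s₀, ∃ ξ, s ≤ ξ ∧ u' ξ = u (s + 1) - u s := fun s hs ↦ by
    have hderiv : ∀ t, s ≤ t → HasDerivAt u (u' t) t := fun t ht ↦ hu t (hs.trans ht)
    obtain ⟨ξ, hξ, hξ'⟩ := exists_hasDerivAt_eq_slope u u' (lt_add_one s)
      (fun t ht ↦ (hderiv t ht.1).continuousAt.continuousWithinAt)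
      (fun t ht ↦ hderiv t ht.1.le)
    exact ⟨ξ, hξ.1.le, by rw [hξ', add_sub_cancel_left, div_one]⟩
  choose! ξ hξ hu'ξ using hslope
  have hξ_top : Tendsto ξ atTop atTop :=
    tendsto_atTop_mono' _ ((eventually_ge_atTop s₀).mono hξ) tendsto_id
  have hincr : Tendsto (fun s ↦ u (s + 1) - u s) atTop (𝓝 0) := by
    have hshift : Tendsto (fun s ↦ u (s + 1)) atTop (𝓝 m) :=
      hm.comp (tendsto_atTop_add_const_right _ 1 tendsto_id)
    simpa only [sub_self] using hshift.sub hm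
  exact tendsto_nhds_unique
    ((hL.comp hξ_top).congr' ((eventually_ge_atTop s₀).mono hu'ξ)) hincr

/- The derivative `3 u² u'` of `u³` is integrable, so `u³` converges, and with it
`u² = |u³| ^ (2 / 3)`, whose limit must vanish. -/
lemma tendsto_zero_of_integrableOn_sq_of_hasDerivAt_bounded {u u' : ℝ → ℝ} {s₀ M : ℝ}
    (hu : ∀ s ∈ Ioi s₀, HasDerivAt u (u' s) s) (hM : ∀ s ∈ Ioi s₀, |u' s| ≤ M)
    (hint : IntegrableOn (fun s ↦ u s ^ 2) (Ioi s₀)) : Tendsto u atTop (𝓝 0) := by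
  have hcube : ∀ s ∈ Ioi s₀, HasDerivAt (fun s ↦ u s ^ 3) (3 * u s ^ 2 * u' s) s := fun s hs ↦ by
    simpa using (hu s hs).fun_pow 3
  have hmeas : AEStronglyMeasurable u' (volume.restrict (Ioi s₀)) :=
    (stronglyMeasurable_deriv u).aestronglyMeasurable.congr <|
      (ae_restrict_mem measurableSet_Ioi).mono fun s hs ↦ (hu s hs).deriv
  have hcube_int : IntegrableOn (fun s ↦ 3 * u s ^ 2 * u' s) (Ioi s₀) :=
    (hint.const_mul 3).mul_bdd hmeas <|
      (ae_restrict_mem measurableSet_Ioi).mono fun s hs ↦ hM s hs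
  have hlim := tendsto_limUnder_of_hasDerivAt_of_integrableOn_Ioi hcube hcube_int
  have hsq := (hlim.abs.rpow_const (p := 2 / 3) (Or.inr (by norm_num))).congr fun s ↦
    show |u s ^ 3| ^ (2 / 3 : ℝ) = u s ^ 2 by
      rw [abs_pow, ← Real.rpow_natCast, ← Real.rpow_mul (abs_nonneg _), ← sq_abs]
      norm_num
  have hzero := IntegrableAtFilter.eq_zero_of_tendsto ⟨_, Ioi_mem_atTop s₀, hint⟩
    (fun s hs ↦ by
      obtain ⟨b, hb⟩ := mem_atTop_sets.1 hs
      exact measure_mono_top (fun t ht ↦ hb t ht) Real.volume_Ici) hsq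
  rw [hzero] at hsq
  rw [tendsto_zero_iff_abs_tendsto_zero]
  simpa only [Function.comp_def, Real.sqrt_sq_eq_abs, Real.sqrt_zero] using hsq.sqrt

lemma frequently_eq_of_frequently_lt_of_frequently_gt {x : ℝ → ℝ} {s₀ c : ℝ}
    (hx : ContinuousOn x (Ici s₀)) (hlt : ∃ᶠ s in atTop, x s < c)
    (hgt : ∃ᶠ s in atTop, c < x s) : ∃ᶠ s in atTop, x s = c := by
  refine frequently_atTop.2 fun s₁ ↦ ?_
  obtain ⟨s₂, hs₂, hx₂⟩ := frequently_atTop.1 hlt (max s₀ s₁)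
  obtain ⟨s₃, hs₃, hx₃⟩ := frequently_atTop.1 hgt s₂
  have hcont : ContinuousOn x (Icc s₂ s₃) :=
    hx.mono fun s hs ↦ (le_of_max_le_left hs₂).trans hs.1
  obtain ⟨s, hs, hxs⟩ := intermediate_value_Icc hs₃ hcont ⟨hx₂.le, hx₃.le⟩
  exact ⟨s, (le_of_max_le_right hs₂).trans hs.1, hxs⟩

lemma exists_tendsto_of_tendsto_comp_of_dense_ne {E : Type*} [TopologicalSpace E] [T1Space E]
    {V : ℝ → E} {x : ℝ → ℝ} {s₀ M : ℝ} {e : E} (hx : ContinuousOn x (Ici s₀))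
    (hM : ∀ s ∈ Ici s₀, |x s| ≤ M) (hV : Dense {y | V y ≠ e})
    (hlim : Tendsto (fun s ↦ V (x s)) atTop (𝓝 e)) : ∃ l, Tendsto x atTop (𝓝 l) := by
  have hbound : ∀ᶠ s in atTop, |x s| ≤ M := (eventually_ge_atTop s₀).mono hM
  refine tendsto_of_no_upcrossings hV (fun p hp q _ hpq ⟨hlt, hgt⟩ ↦ ?_)
    ⟨M, hbound.mono fun s hs ↦ (abs_le.1 hs).2⟩ ⟨-M, hbound.mono fun s hs ↦ (abs_le.1 hs).1⟩
  have hfreq := frequently_eq_of_frequently_lt_of_frequently_gt hx hlt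
    (hgt.mono fun s ↦ hpq.trans)
  obtain ⟨s, hs, hne⟩ := (hfreq.and_eventually (hlim.eventually_ne hp.symm)).exists
  exact hne (congrArg V hs)

lemma dense_ne_of_hasDerivAt_of_dense_ne_zero {V g : ℝ → ℝ} (hV : ∀ y, HasDerivAt V (g y) y)
    (hg : Dense {y | g y ≠ 0}) (e : ℝ) : Dense {y | V y ≠ e} := by
  refine dense_iff_inter_open.2 fun U hU hne ↦ ?_
  by_contra! hempty
  obtain ⟨y, hyU, hy⟩ := dense_iff_inter_open.1 hg U hU hne
  have hconst : V =ᶠ[𝓝 y] fun _ ↦ e := by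
    filter_upwards [hU.mem_nhds hyU] with z hz
    by_contra hVz
    exact hempty.subset ⟨hz, hVz⟩
  exact hy ((hV y).unique ((hasDerivAt_const y e).congr_of_eventuallyEq hconst))

lemma le_of_hasDerivAt_linear {y A B : ℝ → ℝ} {s₀ M K : ℝ}
    (hy : ∀ s ∈ Ici s₀, HasDerivAt y (-A s * y s + B s) s) (hA : ∀ s ∈ Ici s₀, 0 < A s)
    (hB : ∀ s ∈ Ici s₀, B s ≤ M * A s) (hMK : M < K) (h₀ : y s₀ ≤ K) :
    ∀ s ∈ Ici s₀, y s ≤ K := by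
  intro s hs
  refine image_le_of_deriv_right_lt_deriv_boundary (B := fun _ ↦ K) (B' := fun _ ↦ 0)
    (fun t ht ↦ (hy t ht.1).continuousAt.continuousWithinAt)
    (fun t ht ↦ (hy t ht.1).hasDerivWithinAt) h₀ (fun t ↦ hasDerivAt_const t K)
    (fun t ht hyt ↦ ?_) (right_mem_Icc.2 hs)
  rw [hyt]
  linarith [hB t ht.1, mul_lt_mul_of_pos_right hMK (hA t ht.1)]

lemma abs_le_of_hasDerivAt_linear {y A B : ℝ → ℝ} {s₀ M K : ℝ}
    (hy : ∀ s ∈ Ici s₀, HasDerivAt y (-A s * y s + B s) s) (hA : ∀ s ∈ Ici s₀, 0 < A s)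
    (hB : ∀ s ∈ Ici s₀, |B s| ≤ M * A s) (hMK : M < K) (h₀ : |y s₀| ≤ K) :
    ∀ s ∈ Ici s₀, |y s| ≤ K := by
  have hupper := le_of_hasDerivAt_linear hy hA (fun s hs ↦ (le_abs_self _).trans (hB s hs)) hMK
    ((le_abs_self _).trans h₀)
  have hlower := le_of_hasDerivAt_linear (y := -y) (B := -B)
    (fun s hs ↦ (hy s hs).neg.congr_deriv (by simp only [Pi.neg_apply]; ring)) hA
    (fun s hs ↦ (neg_le_abs _).trans (hB s hs)) hMK ((neg_le_abs _).trans h₀)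
  exact fun s hs ↦ abs_le'.2 ⟨hupper s hs, hlower s hs⟩

end RealAnalysis

/-- `(x, v)` is a trajectory, on the time set `S`, of a unit-mass particle with damping
coefficient `a` in the restoring force `g`: it solves `x'' + a x' + g x = 0` with `v = x'`. -/
structure IsDampedOscillator (a g x v : ℝ → ℝ) (S : Set ℝ) : Prop where
  hasDerivAt_position : ∀ s ∈ S, HasDerivAt x (v s) s
  hasDerivAt_velocity : ∀ s ∈ S, HasDerivAt v (-a s * v s - g (x s)) s

/-- The kinetic plus potential energy of a unit-mass particle in the potential `V`. -/
noncomputable def mechanicalEnergy (V x v : ℝ → ℝ) (s : ℝ) : ℝ :=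
  v s ^ 2 / 2 + V (x s)

namespace IsDampedOscillator

variable {a g x v V : ℝ → ℝ} {S T : Set ℝ} {s₀ : ℝ}

lemma mono (h : IsDampedOscillator a g x v S) (hTS : T ⊆ S) : IsDampedOscillator a g x v T :=
  ⟨fun s hs ↦ h.1 s (hTS hs), fun s hs ↦ h.2 s (hTS hs)⟩

lemma comp_neg (h : IsDampedOscillator a g x v S) :
    IsDampedOscillator (fun s ↦ -a (-s)) g (fun s ↦ x (-s)) (fun s ↦ -v (-s))
      (Neg.neg ⁻¹' S) where
  hasDerivAt_position s hs := by
    refine ((h.hasDerivAt_position (-s) hs).comp s (hasDerivAt_neg s)).congr_deriv ?_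
    rw [mul_neg_one]
  hasDerivAt_velocity s hs := by
    refine ((h.hasDerivAt_velocity (-s) hs).comp s (hasDerivAt_neg s)).neg.congr_deriv ?_
    ring

lemma hasDerivAt_mechanicalEnergy (h : IsDampedOscillator a g x v S)
    (hV : ∀ y, HasDerivAt V (g y) y) {s : ℝ} (hs : s ∈ S) :
    HasDerivAt (mechanicalEnergy V x v) (-(a s * v s ^ 2)) s := by
  have hkin := ((h.hasDerivAt_velocity s hs).fun_pow 2).div_const 2
  have hpot := (hV (x s)).comp s (h.hasDerivAt_position s hs)
  refine (hkin.add hpot).congr_deriv ?_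
  norm_num
  ring

lemma antitoneOn_mechanicalEnergy (h : IsDampedOscillator a g x v (Ici s₀))
    (hV : ∀ y, HasDerivAt V (g y) y) (ha : ∀ s ∈ Ici s₀, 0 ≤ a s) :
    AntitoneOn (mechanicalEnergy V x v) (Ici s₀) :=
  antitoneOn_Ici_of_hasDerivAt_nonpos (fun _ hs ↦ h.hasDerivAt_mechanicalEnergy hV hs)
    fun s hs ↦ neg_nonpos.2 (mul_nonneg (ha s hs) (sq_nonneg _))

section Coercive

variable (h : IsDampedOscillator a g x v (Ici s₀)) (hV : ∀ y, HasDerivAt V (g y) y)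
  (hcoer : Tendsto V (cocompact ℝ) atTop) (ha : ∀ s ∈ Ici s₀, 0 ≤ a s)

include h hV hcoer ha

lemma exists_abs_position_le : ∃ M, ∀ s ∈ Ici s₀, |x s| ≤ M := by
  have hsublevel : Bornology.IsBounded {y | V y ≤ mechanicalEnergy V x v s₀} := by
    rw [← Metric.cobounded_eq_cocompact] at hcoer
    refine Bornology.isBounded_def.2 ?_
    filter_upwards [hcoer.eventually_gt_atTop (mechanicalEnergy V x v s₀)] with y hy
    exact hy.not_ge
  obtain ⟨M, hM⟩ := isBounded_iff_forall_norm_le.1 hsublevel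
  refine ⟨M, fun s hs ↦ hM _ ?_⟩
  have henergy := h.antitoneOn_mechanicalEnergy hV ha self_mem_Ici hs hs
  exact (le_add_of_nonneg_left (by positivity)).trans henergy

lemma exists_abs_force_le (hg : Continuous g) : ∃ G, ∀ s ∈ Ici s₀, |g (x s)| ≤ G := by
  obtain ⟨M, hM⟩ := h.exists_abs_position_le hV hcoer ha
  obtain ⟨G, hG⟩ := (isCompact_Icc (a := -M) (b := M)).exists_bound_of_continuousOn hg.continuousOn
  exact ⟨G, fun s hs ↦ hG _ (abs_le.1 (hM s hs))⟩

lemma exists_abs_velocity_le : ∃ M, ∀ s ∈ Ici s₀, |v s| ≤ M := by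
  have hVcont : Continuous V := continuous_iff_continuousAt.2 fun y ↦ (hV y).continuousAt
  obtain ⟨y₀, hy₀⟩ := hVcont.exists_forall_le hcoer
  refine ⟨√(2 * (mechanicalEnergy V x v s₀ - V y₀)), fun s hs ↦ Real.abs_le_sqrt ?_⟩
  have henergy := h.antitoneOn_mechanicalEnergy hV ha self_mem_Ici hs hs
  rw [mechanicalEnergy] at henergy
  linarith [hy₀ (x s)]

lemma exists_tendsto_mechanicalEnergy :
    ∃ e, Tendsto (mechanicalEnergy V x v) atTop (𝓝 e) := by
  have hVcont : Continuous V := continuous_iff_continuousAt.2 fun y ↦ (hV y).continuousAt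
  obtain ⟨y₀, hy₀⟩ := hVcont.exists_forall_le hcoer
  exact exists_tendsto_of_antitoneOn_Ici (h.antitoneOn_mechanicalEnergy hV ha)
    fun s _ ↦ (hy₀ (x s)).trans (le_add_of_nonneg_left (by positivity))

end Coercive

section BoundedDamping

variable {c C : ℝ} (h : IsDampedOscillator a g x v (Ici s₀)) (hV : ∀ y, HasDerivAt V (g y) y)
  (hcoer : Tendsto V (cocompact ℝ) atTop) (hc : 0 < c) (hca : ∀ s ∈ Ici s₀, c ≤ a s)

include h hV hcoer hc hca

lemma integrableOn_velocity_sq : IntegrableOn (fun s ↦ v s ^ 2) (Ioi s₀) := by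
  have ha : ∀ s ∈ Ici s₀, 0 ≤ a s := fun s hs ↦ hc.le.trans (hca s hs)
  obtain ⟨e, he⟩ := h.exists_tendsto_mechanicalEnergy hV hcoer ha
  have hdissipation : IntegrableOn (fun s ↦ -(a s * v s ^ 2)) (Ioi s₀) :=
    integrableOn_Ioi_deriv_of_nonpos' (fun s hs ↦ h.hasDerivAt_mechanicalEnergy hV hs)
      (fun s hs ↦ neg_nonpos.2 (mul_nonneg (ha s (Ioi_subset_Ici_self hs)) (sq_nonneg _))) he
  have hvcont : ContinuousOn v (Ioi s₀) := fun s hs ↦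
    (h.hasDerivAt_velocity s (Ioi_subset_Ici_self hs)).continuousAt.continuousWithinAt
  refine (hdissipation.neg.const_mul c⁻¹).mono'
    ((hvcont.pow 2).aestronglyMeasurable measurableSet_Ioi) ?_
  filter_upwards [ae_restrict_mem measurableSet_Ioi] with s hs
  rw [Real.norm_of_nonneg (sq_nonneg _), Pi.neg_apply, neg_neg, le_inv_mul_iff₀ hc]
  exact mul_le_mul_of_nonneg_right (hca s (Ioi_subset_Ici_self hs)) (sq_nonneg _)

variable (hg : Continuous g) (haC : ∀ s ∈ Ici s₀, a s ≤ C)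

include hg haC

lemma tendsto_velocity_zero : Tendsto v atTop (𝓝 0) := by
  have ha : ∀ s ∈ Ici s₀, 0 ≤ a s := fun s hs ↦ hc.le.trans (hca s hs)
  obtain ⟨M, hM⟩ := h.exists_abs_velocity_le hV hcoer ha
  obtain ⟨G, hG⟩ := h.exists_abs_force_le hV hcoer ha hg
  refine tendsto_zero_of_integrableOn_sq_of_hasDerivAt_bounded (M := C * M + G)
    (fun s hs ↦ h.hasDerivAt_velocity s (Ioi_subset_Ici_self hs)) (fun s hs ↦ ?_)
    (h.integrableOn_velocity_sq hV hcoer hc hca)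
  have hs : s ∈ Ici s₀ := Ioi_subset_Ici_self hs
  calc |-a s * v s - g (x s)| ≤ |-a s * v s| + |g (x s)| := abs_sub _ _
    _ = a s * |v s| + |g (x s)| := by rw [abs_mul, abs_neg, abs_of_nonneg (ha s hs)]
    _ ≤ C * M + G := add_le_add
      (mul_le_mul (haC s hs) (hM s hs) (abs_nonneg _) ((ha s hs).trans (haC s hs))) (hG s hs)

lemma exists_tendsto_position (hdense : Dense {y | g y ≠ 0}) :
    ∃ l, Tendsto x atTop (𝓝 l) := by
  have ha : ∀ s ∈ Ici s₀, 0 ≤ a s := fun s hs ↦ hc.le.trans (hca s hs)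
  obtain ⟨M, hM⟩ := h.exists_abs_position_le hV hcoer ha
  obtain ⟨e, he⟩ := h.exists_tendsto_mechanicalEnergy hV hcoer ha
  have hv := h.tendsto_velocity_zero hV hcoer hc hca hg haC
  have hpot : Tendsto (fun s ↦ V (x s)) atTop (𝓝 e) := by
    simpa [mechanicalEnergy] using he.sub ((hv.pow 2).div_const 2)
  exact exists_tendsto_of_tendsto_comp_of_dense_ne
    (fun s hs ↦ (h.hasDerivAt_position s hs).continuousAt.continuousWithinAt) hM
    (dense_ne_of_hasDerivAt_of_dense_ne_zero hV hdense e) hpot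

theorem exists_tendsto_equilibrium (hdense : Dense {y | g y ≠ 0}) :
    ∃ l, g l = 0 ∧ Tendsto x atTop (𝓝 l) ∧ Tendsto v atTop (𝓝 0) := by
  obtain ⟨l, hl⟩ := h.exists_tendsto_position hV hcoer hc hca hg haC hdense
  have hv := h.tendsto_velocity_zero hV hcoer hc hca hg haC
  have hfriction : Tendsto (fun s ↦ -a s * v s) atTop (𝓝 0) := by
    refine bdd_le_mul_tendsto_zero' C ?_ hv
    filter_upwards [eventually_ge_atTop s₀] with s hs
    rw [abs_neg, abs_of_nonneg (hc.le.trans (hca s hs))]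
    exact haC s hs
  have hacc : Tendsto (fun s ↦ -a s * v s - g (x s)) atTop (𝓝 (0 - g l)) :=
    hfriction.sub ((hg.tendsto l).comp hl)
  have hgl := eq_zero_of_tendsto_of_tendsto_hasDerivAt h.hasDerivAt_velocity hv hacc
  exact ⟨l, by linarith, hl, hv⟩

end BoundedDamping

section ExponentialDamping

variable (h : IsDampedOscillator a g x v (Ici s₀)) (ha : ∀ s ∈ Ici s₀, 1 + Real.exp s ≤ a s)

include h ha

/- The rescaled velocity `y = exp s * v` solves `y' = -(a - 1) y - exp s * g x`, whose forcing is
dominated by its damping because `exp s ≤ a - 1`. -/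
lemma exists_abs_velocity_le_mul_exp_neg {G : ℝ} (hG : ∀ s ∈ Ici s₀, |g (x s)| ≤ G) :
    ∃ K, ∀ s ∈ Ici s₀, |v s| ≤ K * Real.exp (-s) := by
  have hy : ∀ s ∈ Ici s₀, HasDerivAt (fun s ↦ Real.exp s * v s)
      (-(a s - 1) * (Real.exp s * v s) + -(Real.exp s * g (x s))) s := fun s hs ↦
    ((Real.hasDerivAt_exp s).mul (h.hasDerivAt_velocity s hs)).congr_deriv (by ring)
  have hforcing : ∀ s ∈ Ici s₀, |-(Real.exp s * g (x s))| ≤ G * (a s - 1) := fun s hs ↦ by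
    rw [abs_neg, abs_mul, Real.abs_exp, mul_comm]
    exact mul_le_mul (hG s hs) (le_sub_iff_add_le'.2 (ha s hs)) (Real.exp_pos s).le
      ((abs_nonneg _).trans (hG s hs))
  refine ⟨max (G + 1) |Real.exp s₀ * v s₀|, fun s hs ↦ ?_⟩
  have hbound := abs_le_of_hasDerivAt_linear hy
    (fun s hs ↦ (Real.exp_pos s).trans_le (le_sub_iff_add_le'.2 (ha s hs))) hforcing
    ((lt_add_one G).trans_le (le_max_left _ _)) (le_max_right _ _) s hs
  rwa [abs_mul, Real.abs_exp, ← le_div_iff₀' (Real.exp_pos s), div_eq_mul_inv,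
    ← Real.exp_neg] at hbound

theorem exists_tendsto_position_of_exp_le_damping (hV : ∀ y, HasDerivAt V (g y) y)
    (hcoer : Tendsto V (cocompact ℝ) atTop) (hg : Continuous g) :
    ∃ l, Tendsto x atTop (𝓝 l) := by
  obtain ⟨G, hG⟩ := h.exists_abs_force_le hV hcoer
    (fun s hs ↦ (add_pos one_pos (Real.exp_pos s)).le.trans (ha s hs)) hg
  obtain ⟨K, hK⟩ := h.exists_abs_velocity_le_mul_exp_neg ha hG
  have hvcont : ContinuousOn v (Ioi s₀) := fun s hs ↦
    (h.hasDerivAt_velocity s (Ioi_subset_Ici_self hs)).continuousAt.continuousWithinAt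
  have hv : IntegrableOn v (Ioi s₀) :=
    ((integrableOn_exp_neg_Ioi s₀).const_mul K).mono'
      (hvcont.aestronglyMeasurable measurableSet_Ioi) <|
      (ae_restrict_mem measurableSet_Ioi).mono fun s hs ↦ hK s (Ioi_subset_Ici_self hs)
  exact ⟨_, tendsto_limUnder_of_hasDerivAt_of_integrableOn_Ioi
    (fun s hs ↦ h.hasDerivAt_position s (Ioi_subset_Ici_self hs)) hv⟩

end ExponentialDamping

end IsDampedOscillator

/-- The restoring force `|y|^α y - β y` of the autonomous part of the Emden–Fowler equation. -/
noncomputable def emdenForce (α β y : ℝ) : ℝ := |y| ^ α * y - β * y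

/-- The double-well (if `0 < β`) potential with derivative `emdenForce α β`. -/
noncomputable def emdenPotential (α β y : ℝ) : ℝ := |y| ^ (α + 2) / (α + 2) - β * y ^ 2 / 2

section Emden

variable {α : ℝ} (hα : 0 < α) (β : ℝ)

include hα

lemma continuous_emdenForce : Continuous (emdenForce α β) := by
  have hpow : Continuous fun y : ℝ ↦ |y| ^ α := continuous_abs.rpow_const fun _ ↦ Or.inr hα.le
  exact (hpow.mul continuous_id).sub (continuous_const_mul β)

lemma hasDerivAt_emdenPotential (y : ℝ) :
    HasDerivAt (emdenPotential α β) (emdenForce α β y) y := by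
  have hpow := (hasDerivAt_abs_rpow y (p := α + 2) (by linarith)).div_const (α + 2)
  have hsq := ((hasDerivAt_pow 2 y).const_mul β).div_const 2
  refine (hpow.sub hsq).congr_deriv ?_
  rw [emdenForce, add_sub_cancel_right]
  push_cast
  field_simp

lemma tendsto_emdenPotential_cocompact :
    Tendsto (emdenPotential α β) (cocompact ℝ) atTop := by
  have habs : Tendsto (fun y : ℝ ↦ |y|) (cocompact ℝ) atTop := tendsto_norm_cocompact_atTop
  have hfactor : Tendsto (fun y : ℝ ↦ |y| ^ α / (α + 2) - β / 2) (cocompact ℝ) atTop :=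
    tendsto_atTop_add_const_right _ _ <|
      ((tendsto_rpow_atTop hα).comp habs).atTop_div_const (by positivity)
  refine (((tendsto_pow_atTop two_ne_zero).comp habs).atTop_mul_atTop₀ hfactor).congr fun y ↦ ?_
  simp only [emdenPotential, Function.comp_apply]
  rw [Real.rpow_add_of_nonneg (abs_nonneg y) hα.le zero_le_two, Real.rpow_two, sq_abs]
  ring

end Emden

lemma eq_zero_or_eq_rpow_or_eq_neg_rpow_of_abs_rpow_mul_eq {α β y : ℝ} (hα : α ≠ 0)
    (hy : |y| ^ α * y = β * y) : y = 0 ∨ y = β ^ (1 / α) ∨ y = -β ^ (1 / α) := by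
  have hfactor : (|y| ^ α - β) * y = 0 := by rw [sub_mul, hy, sub_self]
  refine (mul_eq_zero.1 hfactor).symm.imp_right fun hβ ↦ ?_
  rw [← sub_eq_zero.1 hβ, one_div, Real.rpow_rpow_inv (abs_nonneg y) hα]
  exact eq_or_eq_neg_of_abs_eq rfl

lemma dense_emdenForce_ne_zero {α : ℝ} (hα : α ≠ 0) (β : ℝ) :
    Dense {y | emdenForce α β y ≠ 0} := by
  have hfinite : {y | emdenForce α β y = 0}.Finite :=
    (toFinite {0, β ^ (1 / α), -β ^ (1 / α)}).subset fun _ hy ↦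
      eq_zero_or_eq_rpow_or_eq_neg_rpow_of_abs_rpow_mul_eq hα (sub_eq_zero.1 hy)
  exact hfinite.countable.dense_compl ℝ

/-- The Emden–Fowler transform of `f`: the function `r ^ p * f r` in the logarithmic variable
`t = log r`. -/
noncomputable def emdenFowler (p : ℝ) (f : ℝ → ℝ) (t : ℝ) : ℝ := Real.exp (p * t) * f (Real.exp t)

section EmdenFowler

variable {p L t : ℝ} {f f' : ℝ → ℝ}

lemma hasDerivAt_emdenFowler (hf : HasDerivAt f (f' (Real.exp t)) (Real.exp t)) :
    HasDerivAt (emdenFowler p f) (p * emdenFowler p f t + emdenFowler (p + 1) f' t) t := by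
  have hexp := ((hasDerivAt_id t).const_mul p).exp
  refine (hexp.mul (hf.comp t (Real.hasDerivAt_exp t))).congr_deriv ?_
  rw [emdenFowler, emdenFowler, add_one_mul, Real.exp_add]
  simp only [id, Function.comp_apply]
  ring

lemma emdenFowler_log {r : ℝ} (hr : 0 < r) : emdenFowler p f (Real.log r) = r ^ p * f r := by
  rw [emdenFowler, Real.exp_log hr, mul_comm p, ← Real.rpow_def_of_pos hr]

lemma tendsto_rpow_mul_nhdsGT_zero_of_emdenFowler
    (h : Tendsto (emdenFowler p f) atBot (𝓝 L)) :
    Tendsto (fun r ↦ r ^ p * f r) (𝓝[>] 0) (𝓝 L) :=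
  (h.comp Real.tendsto_log_nhdsGT_zero).congr' <|
    eventually_mem_nhdsWithin.mono fun _ hr ↦ emdenFowler_log hr

lemma tendsto_rpow_mul_atTop_of_emdenFowler (h : Tendsto (emdenFowler p f) atTop (𝓝 L)) :
    Tendsto (fun r ↦ r ^ p * f r) atTop (𝓝 L) :=
  (h.comp Real.tendsto_log_atTop).congr' <|
    (eventually_gt_atTop 0).mono fun _ hr ↦ emdenFowler_log hr

lemma abs_emdenFowler_rpow {α : ℝ} (hα : α ≠ 0) :
    |emdenFowler (2 / α) f t| ^ α = Real.exp t ^ 2 * |f (Real.exp t)| ^ α := by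
  rw [emdenFowler, abs_mul, Real.abs_exp, Real.mul_rpow (Real.exp_pos _).le (abs_nonneg _),
    ← Real.exp_mul, ← Real.exp_nat_mul]
  congr 2
  push_cast
  field_simp

end EmdenFowler

/-- `f` is a `C²` solution on `(0, ∞)` of the profile equation
`f'' + ((d - 1) / r + r / 2) f' + f / α + |f|^α f = 0` in real dimension `d`. -/
structure IsProfile (d α : ℝ) (f : ℝ → ℝ) : Prop where
  contDiffOn : ContDiffOn ℝ 2 f (Ioi 0)
  ode : ∀ r : ℝ, 0 < r →
    deriv (deriv f) r + ((d - 1) / r + r / 2) * deriv f r + f r / α + |f r| ^ α * f r = 0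

namespace IsProfile

variable {d α β : ℝ} {f : ℝ → ℝ}

lemma hasDerivAt (hf : IsProfile d α f) {r : ℝ} (hr : 0 < r) : HasDerivAt f (deriv f r) r :=
  ((hf.contDiffOn.differentiableOn two_ne_zero).differentiableAt (Ioi_mem_nhds hr)).hasDerivAt

lemma hasDerivAt_deriv (hf : IsProfile d α f) {r : ℝ} (hr : 0 < r) :
    HasDerivAt (deriv f) (deriv (deriv f) r) r :=
  (((hf.contDiffOn.deriv_of_isOpen (m := 1) isOpen_Ioi (by norm_num)).differentiableOn
    one_ne_zero).differentiableAt (Ioi_mem_nhds hr)).hasDerivAt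

lemma emdenFowler_deriv_deriv (hf : IsProfile d α f) (hα : α ≠ 0) (t : ℝ) :
    emdenFowler (2 / α + 1 + 1) (deriv (deriv f)) t =
      -(d - 1 + Real.exp (2 * t) / 2) * emdenFowler (2 / α + 1) (deriv f) t
        - Real.exp (2 * t) / α * emdenFowler (2 / α) f t
        - |emdenFowler (2 / α) f t| ^ α * emdenFowler (2 / α) f t := by
  have hode := hf.ode (Real.exp t) (Real.exp_pos t)
  rw [abs_emdenFowler_rpow hα, two_mul t, Real.exp_add]
  simp only [emdenFowler, add_one_mul, Real.exp_add]
  have hr := Real.exp_ne_zero t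
  field_simp at hode ⊢
  linear_combination hode

theorem isDampedOscillator_emdenFowler (hf : IsProfile d α f) (hα : α ≠ 0)
    (hβ : β = 2 / α * (d - 2 - 2 / α)) :
    IsDampedOscillator (fun t ↦ Real.exp (2 * t) / 2 - (4 / α - (d - 2))) (emdenForce α β)
      (emdenFowler (2 / α) f)
      (fun t ↦ 2 / α * emdenFowler (2 / α) f t + emdenFowler (2 / α + 1) (deriv f) t) univ := by
  have hw (t : ℝ) := hasDerivAt_emdenFowler (p := 2 / α) (hf.hasDerivAt (Real.exp_pos t))
  refine ⟨fun t _ ↦ hw t, fun t _ ↦ ?_⟩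
  have hw' := hasDerivAt_emdenFowler (p := 2 / α + 1) (hf.hasDerivAt_deriv (Real.exp_pos t))
  refine (((hw t).const_mul (2 / α)).add hw').congr_deriv ?_
  rw [hf.emdenFowler_deriv_deriv hα, emdenForce, hβ]
  ring

theorem exists_tendsto_nhdsGT_zero (hf : IsProfile d α f) (hα : 0 < α)
    (hβ : β = 2 / α * (d - 2 - 2 / α)) (hsub : α * (d - 2) < 4) :
    ∃ ℓ, |ℓ| ^ α * ℓ = β * ℓ ∧
      Tendsto (fun r ↦ r ^ (2 / α) * f r) (𝓝[>] 0) (𝓝 ℓ) ∧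
      Tendsto (fun r ↦ r ^ (1 + 2 / α) * deriv f r) (𝓝[>] 0) (𝓝 (-(2 / α) * ℓ)) := by
  have hc : 0 < 4 / α - (d - 2) := sub_pos.2 ((lt_div_iff₀' hα).2 hsub)
  obtain ⟨s₀, hs₀⟩ : ∃ s₀, ∀ s ≥ s₀, Real.exp (2 * -s) < 4 / α - (d - 2) :=
    eventually_atTop.1 <| ((Real.tendsto_exp_atBot.comp
      (tendsto_neg_atTop_atBot.const_mul_atBot two_pos)).eventually_lt_const hc)
  have hosc := (hf.isDampedOscillator_emdenFowler hα.ne' hβ).comp_neg.mono (subset_univ (Ici s₀))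
  obtain ⟨ℓ, hℓ, hw, hw'⟩ := hosc.exists_tendsto_equilibrium (hasDerivAt_emdenPotential hα β)
    (tendsto_emdenPotential_cocompact hα β) (half_pos hc)
    (fun s hs ↦ by linarith [hs₀ s hs]) (continuous_emdenForce hα β) (C := 4 / α - (d - 2))
    (fun s _ ↦ by linarith [Real.exp_pos (2 * -s)]) (dense_emdenForce_ne_zero hα.ne' β)
  have hw₀ : Tendsto (emdenFowler (2 / α) f) atBot (𝓝 ℓ) := by
    simpa only [Function.comp_def, neg_neg] using hw.comp tendsto_neg_atBot_atTop
  have hw₀' : Tendsto (emdenFowler (1 + 2 / α) (deriv f)) atBot (𝓝 (-(2 / α) * ℓ)) := by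
    simpa [Function.comp_def, add_comm (1 : ℝ)] using
      (hw'.comp tendsto_neg_atBot_atTop).neg.sub (hw₀.const_mul (2 / α))
  exact ⟨ℓ, sub_eq_zero.1 hℓ, tendsto_rpow_mul_nhdsGT_zero_of_emdenFowler hw₀,
    tendsto_rpow_mul_nhdsGT_zero_of_emdenFowler hw₀'⟩

theorem exists_tendsto_atTop (hf : IsProfile d α f) (hα : 0 < α) :
    ∃ μ, Tendsto (fun r ↦ r ^ (2 / α) * f r) atTop (𝓝 μ) := by
  obtain ⟨s₀, hs₀⟩ := eventually_atTop.1 <| (Real.tendsto_exp_atTop.eventually_ge_atTop 4).and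
    (Real.tendsto_exp_atTop.eventually_ge_atTop (1 + (4 / α - (d - 2))))
  have hosc := (hf.isDampedOscillator_emdenFowler hα.ne' rfl).mono (subset_univ (Ici s₀))
  have hdamping : ∀ s ∈ Ici s₀,
      1 + Real.exp s ≤ Real.exp (2 * s) / 2 - (4 / α - (d - 2)) := fun s hs ↦ by
    obtain ⟨h4, hc⟩ := hs₀ s hs
    rw [two_mul, Real.exp_add]
    nlinarith
  obtain ⟨μ, hμ⟩ := hosc.exists_tendsto_position_of_exp_le_damping hdamping
    (hasDerivAt_emdenPotential hα _) (tendsto_emdenPotential_cocompact hα _)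
    (continuous_emdenForce hα _)
  exact ⟨μ, tendsto_rpow_mul_atTop_of_emdenFowler hμ⟩

end IsProfile

theorem stmt_18_general {d α β : ℝ} (hα : 0 < α) (hβ : β = 2 / α * (d - 2 - 2 / α)) {f : ℝ → ℝ}
    (hf : IsProfile d α f) :
    (α * (d - 2) < 4 → ∃ ℓ, |ℓ| ^ α * ℓ = β * ℓ ∧
      Tendsto (fun r ↦ r ^ (2 / α) * f r) (𝓝[>] 0) (𝓝 ℓ) ∧
      Tendsto (fun r ↦ r ^ (1 + 2 / α) * deriv f r) (𝓝[>] 0) (𝓝 (-(2 / α) * ℓ))) ∧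
    ∃ μ, Tendsto (fun r ↦ r ^ (2 / α) * f r) atTop (𝓝 μ) :=
  ⟨hf.exists_tendsto_nhdsGT_zero hα hβ, hf.exists_tendsto_atTop hα⟩

end

theorem stmt_18 (N : ℕ) (hN : 3 ≤ N) (α β : ℝ)
    (hα1 : 2 / ((N : ℝ) - 2) < α) (hα2 : α < 4 / ((N : ℝ) - 2))
    (hβ : β = 2 / α * ((N : ℝ) - 2 - 2 / α))
    (f : ℝ → ℝ) (hfC2 : ContDiffOn ℝ 2 f (Set.Ioi 0))
    (hfode : ∀ r : ℝ, 0 < r →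
      deriv (deriv f) r + (((N : ℝ) - 1) / r + r / 2) * deriv f r + f r / α
        + |f r| ^ α * f r = 0) :
    -- (1) and (2): the limit ℓ as r → 0 exists, lies in {0, β^{1/α}, −β^{1/α}},
    -- and r^{1+2/α} f'(r) → −(2/α) ℓ
    (∃ ℓ : ℝ, (ℓ = 0 ∨ ℓ = β ^ (1 / α) ∨ ℓ = -β ^ (1 / α)) ∧
      Tendsto (fun r : ℝ => r ^ (2 / α) * f r) (nhdsWithin 0 (Set.Ioi 0)) (nhds ℓ) ∧
      Tendsto (fun r : ℝ => r ^ (1 + 2 / α) * deriv f r)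
        (nhdsWithin 0 (Set.Ioi 0)) (nhds (-(2 / α) * ℓ))) ∧
    -- (3) the limit μ as r → ∞ exists and is finite
    (∃ μ : ℝ, Tendsto (fun r : ℝ => r ^ (2 / α) * f r) atTop (nhds μ)) := by
  have hN2 : 0 < (N : ℝ) - 2 := sub_pos.2 (by exact_mod_cast hN)
  have hα : 0 < α := (div_pos two_pos hN2).trans hα1
  exact (stmt_18_general hα hβ ⟨hfC2, hfode⟩).imp_left fun hzero ↦
    (hzero ((lt_div_iff₀ hN2).1 hα2)).imp fun _ ↦
      And.imp_left (eq_zero_or_eq_rpow_or_eq_neg_rpow_of_abs_rpow_mul_eq hα.ne')
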